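/- Let A be a connected graded k-algebra. Then the projective dimension of A as a left A^e-module equals the projective dimension of the trivial module k = A/A_{≥1} as a left A-module (both possibly infinite); the latter equals the global dimension of A. -/

import Mathlib

open CategoryTheory Limits TensorProduct

universe u

/-- The injective dimension of a module `M`, defined as the least `n : ℕ∞` for which
there is an injective resolution of `M` that vanishes in all cohomological degrees `> n`. -/
noncomputable def ModuleCat.injDim {R : Type u} [Ring R] (M : ModuleCat.{u} R) : ℕ∞ :=
  sInf {n : ℕ∞ | ∃ I : InjectiveResolution M, ∀ i : ℕ, n < (i : ℕ∞) → IsZero (I.cocomplex.X i)}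

/-- The projective dimension of a module `M`, defined as the least `n : ℕ∞` for which
there is a projective resolution of `M` that vanishes in all homological degrees `> n`. -/
noncomputable def ModuleCat.projDim {R : Type u} [Ring R] (M : ModuleCat.{u} R) : ℕ∞ :=
  sInf {n : ℕ∞ | ∃ P : ProjectiveResolution M, ∀ i : ℕ, n < (i : ℕ∞) → IsZero (P.complex.X i)}

/-- The injective dimension of a ring as a left module over itself. -/
noncomputable def Ring.selfInjDim (R : Type u) [Ring R] : ℕ∞ :=
  ModuleCat.injDim (ModuleCat.of R R)

/-- The left global dimension of a ring: the supremum of the projective dimensions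
of all left `R`-modules. -/
noncomputable def Ring.globalDim (R : Type u) [Ring R] : ℕ∞ :=
  ⨆ M : ModuleCat.{u} R, M.projDim

/-- `A` is a left module over its enveloping algebra `A ⊗[k] Aᵐᵒᵖ`, via `(a ⊗ bᵒᵖ) • x = a * x * b`. -/
noncomputable instance (priority := 50) envModule (k : Type u) [Field k]
    (A : Type u) [Ring A] [Algebra k A] :
    Module (A ⊗[k] Aᵐᵒᵖ) A :=
  TensorProduct.Algebra.module

/-!
Both inequalities between `pd_{Aᵉ} A` and the invariants of `A` come from the bimodules
`Hom_k(M, N)`. Since `Hom_k(A ⊗ V, N)` is coinduced from a left `A`-module, it is injective relative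
to `A`, and shifting dimension along `0 → M' → A ⊗ M → M → 0` gives
`Ext_{Aᵉ}^n(A, Hom_k(M, N)) = 0 ↔ Ext_A^n(M, N) = 0` for `n ≥ 1`.
Hence `gldim A ≤ pd_{Aᵉ} A`. Conversely `Aᵉ` is itself connected graded and `A` is a graded
`Aᵉ`-module that vanishes in negative degrees; for such a module, minimal covers and the graded
Nakayama lemma show that the projective dimension is detected by `Ext` into any nonzero module
annihilated by the elements of positive degree. Taking `Hom_k(k, k)` for that module gives
`pd_{Aᵉ} A ≤ pd_A k`, and `pd_A k ≤ gldim A` closes the circle.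
-/

section FiniteResolution

variable {C : Type*} [Category C] [Abelian C]

lemma exact_epi_comp {X Y Z W : C} {q : X ⟶ Y} {f : Y ⟶ Z} {g : Z ⟶ W} [Epi q] {w : f ≫ g = 0}
    (h : (ShortComplex.mk f g w).Exact) :
    (ShortComplex.mk (q ≫ f) g (by rw [Category.assoc, w, comp_zero])).Exact := by
  let φ : ShortComplex.mk (q ≫ f) g (by rw [Category.assoc, w, comp_zero]) ⟶
      ShortComplex.mk f g w := { τ₁ := q, τ₂ := 𝟙 _, τ₃ := 𝟙 _ }
  have : Epi φ.τ₁ := ‹Epi q›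
  have : IsIso φ.τ₂ := inferInstanceAs (IsIso (𝟙 Z))
  have : Mono φ.τ₃ := inferInstanceAs (Mono (𝟙 W))
  exact (ShortComplex.exact_iff_of_epi_of_isIso_of_mono φ).2 h

lemma exact_comp_mono {X Y Z W : C} {f : X ⟶ Y} {g : Y ⟶ Z} {m : Z ⟶ W} [Mono m] {w : f ≫ g = 0}
    (h : (ShortComplex.mk f g w).Exact) :
    (ShortComplex.mk f (g ≫ m) (by rw [← Category.assoc, w, zero_comp])).Exact := by
  let φ : ShortComplex.mk f g w ⟶
      ShortComplex.mk f (g ≫ m) (by rw [← Category.assoc, w, zero_comp]) :=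
    { τ₁ := 𝟙 _, τ₂ := 𝟙 _, τ₃ := m }
  have : Epi φ.τ₁ := inferInstanceAs (Epi (𝟙 X))
  have : IsIso φ.τ₂ := inferInstanceAs (IsIso (𝟙 Y))
  have : Mono φ.τ₃ := ‹Mono m›
  exact (ShortComplex.exact_iff_of_epi_of_isIso_of_mono φ).1 h

lemma exists_projectiveResolution_of_exact {X : C} (K : ChainComplex C ℕ)
    (hK : ∀ n, Projective (K.X n)) (π : K.X 0 ⟶ X) (hπ : Epi π) (w : K.d 1 0 ≫ π = 0)
    (h₀ : (ShortComplex.mk _ _ w).Exact) (h : ∀ n, K.ExactAt (n + 1)) :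
    ∃ P : ProjectiveResolution X, P.complex = K := by
  let ε := (ChainComplex.toSingle₀Equiv K X).symm ⟨π, w⟩
  have hε : ε.f 0 = π := ChainComplex.toSingle₀Equiv_symm_apply_f_zero π w
  refine ⟨{ complex := K, projective := hK, π := ε, quasiIso := ⟨fun n => ?_⟩ }, rfl⟩
  cases n with
  | zero =>
    rw [ChainComplex.quasiIsoAt₀_iff,
      ShortComplex.quasiIso_iff_of_zeros' _ (K.shape 0 0 (by simp)) rfl rfl]
    refine (ShortComplex.exact_and_epi_g_iff_of_iso ?_).2 ⟨h₀, hπ⟩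
    exact ShortComplex.isoMk (Iso.refl _) (Iso.refl _) (Iso.refl _)
      ((Category.id_comp _).trans (Category.comp_id _).symm)
      ((Category.id_comp _).trans (hε.symm.trans (Category.comp_id _).symm))
  | succ n =>
    rw [quasiIsoAt_iff_exactAt']
    · exact h n
    · exact ChainComplex.exactAt_succ_single_obj X n

lemma exists_projectiveResolution_splice {S : ShortComplex C} (hS : S.ShortExact)
    [Projective S.X₂] (Q : ProjectiveResolution S.X₁) :
    ∃ P : ProjectiveResolution S.X₃, ∀ i, P.complex.X (i + 1) = Q.complex.X i := by
  have := hS.mono_f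
  let q : Q.complex.X 0 ⟶ S.X₁ := Q.π.f 0
  have : Epi q := inferInstanceAs (Epi (Q.π.f 0))
  have hq : Q.complex.d 1 0 ≫ q = 0 := Q.complex_d_comp_π_f_zero
  let K := ChainComplex.augment Q.complex (q ≫ S.f) (by rw [← Category.assoc, hq, zero_comp])
  obtain ⟨P, hP⟩ := exists_projectiveResolution_of_exact K
    (by rintro (_ | n); exacts [‹Projective S.X₂›, Q.projective n]) S.g hS.epi_g
    (show (q ≫ S.f) ≫ S.g = 0 by rw [Category.assoc, S.zero, comp_zero])
    (exact_epi_comp hS.exact : (ShortComplex.mk (q ≫ S.f) S.g _).Exact) (fun n => by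
      rw [HomologicalComplex.exactAt_iff' _ (n + 2) (n + 1) n (by simp) (by simp)]
      cases n with
      | zero => exact exact_comp_mono (m := S.f) Q.exact₀
      | succ n => exact Q.exact_succ n)
  exact ⟨P, fun i => by rw [hP]; rfl⟩

lemma exists_projectiveResolution_isZero [EnoughProjectives C] (n : ℕ) (X : C)
    (h : HasProjectiveDimensionLT X (n + 1)) :
    ∃ P : ProjectiveResolution X, ∀ i, n < i → IsZero (P.complex.X i) := by
  induction n generalizing X with
  | zero =>
    have : Projective X := projective_iff_hasProjectiveDimensionLT_one.2 h
    exact ⟨ProjectiveResolution.self X, fun i hi =>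
      HomologicalComplex.isZero_single_obj_X _ _ _ _ hi.ne'⟩
  | succ n ih =>
    have hS : (ShortComplex.mk _ _ (kernel.condition (Projective.π X))).ShortExact :=
      { exact := ShortComplex.exact_kernel _ }
    have : Projective (Projective.over X) := Projective.projective_over X
    obtain ⟨Q, hQ⟩ := ih _ ((hS.hasProjectiveDimensionLT_X₃_iff n this).1 h)
    obtain ⟨P, hP⟩ := exists_projectiveResolution_splice hS Q
    refine ⟨P, fun i hi => ?_⟩
    obtain ⟨j, rfl⟩ := Nat.exists_eq_add_one_of_ne_zero (Nat.ne_zero_of_lt hi)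
    rw [hP]
    exact hQ j (by lia)

lemma hasProjectiveDimensionLT_of_projectiveResolution_isZero {n : ℕ} {X : C}
    (P : ProjectiveResolution X) (hP : ∀ i, n < i → IsZero (P.complex.X i)) :
    HasProjectiveDimensionLT X (n + 1) := by
  let := HasExt.standard C
  refine HasProjectiveDimensionLT.mk fun i hi Y e => ?_
  obtain ⟨f, hf, rfl⟩ := P.extMk_surjective e (i + 1) rfl
  obtain rfl : f = 0 := (hP i hi).eq_of_src _ _
  simp

lemma projDim_le_iff {R : Type u} [Ring R] (M : ModuleCat.{u} R) (n : ℕ) :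
    M.projDim ≤ n ↔ HasProjectiveDimensionLT M (n + 1) := by
  constructor
  · intro h
    have hne : {n : ℕ∞ | ∃ P : ProjectiveResolution M,
        ∀ i : ℕ, n < (i : ℕ∞) → IsZero (P.complex.X i)}.Nonempty :=
      ⟨⊤, (HasProjectiveResolution.out (Z := M)).some, fun i hi => by simp at hi⟩
    obtain ⟨P, hP⟩ := csInf_mem hne
    exact hasProjectiveDimensionLT_of_projectiveResolution_isZero P fun i hi =>
      hP i (h.trans_lt (by exact_mod_cast hi))
  · intro h
    obtain ⟨P, hP⟩ := exists_projectiveResolution_isZero n M h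
    exact sInf_le ⟨P, fun i hi => hP i (by exact_mod_cast hi)⟩

lemma projDim_le_projDim_of_forall {R S : Type u} [Ring R] [Ring S] {M : ModuleCat.{u} R}
    {N : ModuleCat.{u} S}
    (h : ∀ n, HasProjectiveDimensionLT N (n + 1) → HasProjectiveDimensionLT M (n + 1)) :
    M.projDim ≤ N.projDim := by
  refine WithTop.forall_le_coe_iff_le.1 fun n hn => ?_
  exact (projDim_le_iff M n).2 (h n ((projDim_le_iff N n).1 hn))

end FiniteResolution

section ExtShift

open Abelian

variable {C : Type*} [Category C] [Abelian C] [HasExt C] {S : ShortComplex C}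

lemma subsingleton_ext_X₁_iff_X₃ (hS : S.ShortExact) {X : C}
    (hX : ∀ i, Subsingleton (Ext X S.X₂ (i + 1))) (n : ℕ) :
    Subsingleton (Ext X S.X₁ (n + 2)) ↔ Subsingleton (Ext X S.X₃ (n + 1)) := by
  refine ⟨fun h => subsingleton_of_forall_eq 0 fun x => ?_,
    fun h => subsingleton_of_forall_eq 0 fun x => ?_⟩
  · obtain ⟨y, rfl⟩ := Ext.covariant_sequence_exact₃ X hS x rfl (Subsingleton.elim _ _)
    rw [Subsingleton.elim y 0, Ext.zero_comp]
  · obtain ⟨y, rfl⟩ := Ext.covariant_sequence_exact₁ X hS x (Subsingleton.elim _ _) rfl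
    rw [Subsingleton.elim y 0, Ext.zero_comp]

lemma subsingleton_ext_one_iff_forall_exists_lift (hS : S.ShortExact) {X : C}
    (hX : Subsingleton (Ext X S.X₂ 1)) :
    Subsingleton (Ext X S.X₁ 1) ↔ ∀ g : X ⟶ S.X₃, ∃ h : X ⟶ S.X₂, h ≫ S.g = g := by
  refine ⟨fun h g => ?_, fun h => subsingleton_of_forall_eq 0 fun x => ?_⟩
  · obtain ⟨y, hy⟩ := Ext.covariant_sequence_exact₃ X hS (Ext.mk₀ g) (zero_add 1)
      (Subsingleton.elim _ _)
    obtain ⟨y, rfl⟩ := Ext.homEquiv₀.symm.surjective y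
    exact ⟨y, Ext.homEquiv₀.symm.injective (by simpa using hy)⟩
  · obtain ⟨y, rfl⟩ := Ext.covariant_sequence_exact₁ X hS x (Subsingleton.elim _ _) (zero_add 1)
    obtain ⟨g, rfl⟩ := Ext.homEquiv₀.symm.surjective y
    obtain ⟨g, rfl⟩ := h g
    simp [← Ext.mk₀_comp_mk₀]

variable {R F X Y : Type u} [Ring R] [AddCommGroup F] [Module R F] [Module.Projective R F]
  [AddCommGroup X] [Module R X] [AddCommGroup Y] [Module R Y]
  {φ : F →ₗ[R] X} (hφ : Function.Surjective φ)

include hφ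

lemma subsingleton_ext_add_two_iff_ker (n : ℕ) :
    Subsingleton (Ext (ModuleCat.of R X) (ModuleCat.of R Y) (n + 2)) ↔
      Subsingleton (Ext (ModuleCat.of R (LinearMap.ker φ)) (ModuleCat.of R Y) (n + 1)) := by
  have hS := LinearMap.shortExact_shortComplexKer hφ
  have : Projective φ.shortComplexKer.X₂ := (IsProjective.iff_projective F).1 inferInstance
  refine ⟨fun h => subsingleton_of_forall_eq 0 fun x => ?_,
    fun h => subsingleton_of_forall_eq 0 fun x => ?_⟩
  · obtain ⟨y, rfl⟩ := Ext.contravariant_sequence_exact₁ hS _ x (add_comm 1 (n + 1))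
      (h.elim _ _)
    rw [y.eq_zero_of_projective, Ext.comp_zero]
  · obtain ⟨y, rfl⟩ := Ext.contravariant_sequence_exact₃ hS _ x (Ext.eq_zero_of_projective _)
      (add_comm 1 (n + 1))
    rw [h.elim y 0, Ext.comp_zero]

lemma subsingleton_ext_one_iff_forall_exists_extension :
    Subsingleton (Ext (ModuleCat.of R X) (ModuleCat.of R Y) 1) ↔
      ∀ g : LinearMap.ker φ →ₗ[R] Y, ∃ h : F →ₗ[R] Y, ∀ x : LinearMap.ker φ, h x = g x := by
  have hS := LinearMap.shortExact_shortComplexKer hφ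
  have : Projective φ.shortComplexKer.X₂ := (IsProjective.iff_projective F).1 inferInstance
  refine ⟨fun h g => ?_, fun h => subsingleton_of_forall_eq 0 fun x => ?_⟩
  · obtain ⟨y, hy⟩ := Ext.contravariant_sequence_exact₁ hS _ (Ext.mk₀ (ModuleCat.ofHom g))
      (add_comm 1 0) (h.elim _ _)
    obtain ⟨y, rfl⟩ := Ext.homEquiv₀.symm.surjective y
    have hy' : φ.shortComplexKer.f ≫ y = ModuleCat.ofHom g :=
      Ext.homEquiv₀.symm.injective (by simpa using hy)
    exact ⟨y.hom, fun x => congr($hy' x)⟩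
  · obtain ⟨y, rfl⟩ := Ext.contravariant_sequence_exact₃ hS _ x (Ext.eq_zero_of_projective _)
      (add_comm 1 0)
    obtain ⟨g, rfl⟩ := Ext.homEquiv₀.symm.surjective y
    obtain ⟨h, hh⟩ := h g.hom
    obtain rfl : φ.shortComplexKer.f ≫ ModuleCat.ofHom h = g :=
      ModuleCat.hom_ext (LinearMap.ext hh)
    rw [Ext.homEquiv₀_symm_apply, ← Ext.mk₀_comp_mk₀]
    exact hS.extClass_comp_assoc _

lemma hasProjectiveDimensionLT_add_two_iff_ker (n : ℕ) :
    HasProjectiveDimensionLT (ModuleCat.of R X) (n + 2) ↔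
      HasProjectiveDimensionLT (ModuleCat.of R (LinearMap.ker φ)) (n + 1) :=
  (LinearMap.shortExact_shortComplexKer hφ).hasProjectiveDimensionLT_X₃_iff n
    ((IsProjective.iff_projective F).1 inferInstance)

end ExtShift

section RelativelyInjective

open Abelian

/-- Relative injectivity in Hochschild's sense, for a ring `R` over a ring `S`: an `R`-linear map
into `Y` extends along every injection that has an `S`-linear retraction. -/
def IsRelativelyInjective (S R Y : Type u) [Ring S] [Ring R] [Module S R] [AddCommGroup Y]
    [Module R Y] : Prop :=
  ∀ ⦃K F : Type u⦄ [AddCommGroup K] [Module R K] [Module S K] [IsScalarTower S R K]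
    [AddCommGroup F] [Module R F] [Module S F] [IsScalarTower S R F]
    (i : K →ₗ[R] F) (r : F →ₗ[S] K), (∀ x, r (i x) = x) →
    ∀ g : K →ₗ[R] Y, ∃ h : F →ₗ[R] Y, h ∘ₗ i = g

lemma exists_retraction_ker_of_surjective {S R F X : Type*} [Ring S] [Ring R] [Module S R]
    [AddCommGroup F] [Module R F] [Module S F] [IsScalarTower S R F]
    [AddCommGroup X] [Module R X] [Module S X] [IsScalarTower S R X] [Module.Projective S X]
    (φ : F →ₗ[R] X) (hφ : Function.Surjective φ) :
    ∃ r : F →ₗ[S] LinearMap.ker φ, ∀ x : LinearMap.ker φ, r x = x := by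
  let φS := φ.restrictScalars S
  obtain ⟨σ, hσ⟩ := Module.projective_lifting_property φS LinearMap.id hφ
  have φ_σ (x : X) : φ (σ x) = x := LinearMap.congr_fun hσ x
  have φ_sub (x : F) : φ (x - σ (φ x)) = 0 := by rw [map_sub, φ_σ, sub_self]
  refine ⟨(LinearMap.id - σ ∘ₗ φS).codRestrict ((LinearMap.ker φ).restrictScalars S) φ_sub,
    fun x => Subtype.ext ?_⟩
  change (x : F) - σ (φ x) = x
  rw [LinearMap.mem_ker.1 x.2, map_zero, sub_zero]

variable {S R : Type u} [Ring S] [Ring R] [Module S R] [IsScalarTower S R R]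
  [Module.Projective S R] {Y : Type u} [AddCommGroup Y] [Module R Y]

open scoped Classical in
theorem IsRelativelyInjective.subsingleton_ext (hY : IsRelativelyInjective S R Y) (n : ℕ)
    (X : Type u) [AddCommGroup X] [Module R X] [Module S X] [IsScalarTower S R X]
    [Module.Projective S X] :
    Subsingleton (Ext (ModuleCat.of R X) (ModuleCat.of R Y) (n + 1)) := by
  induction n generalizing X with
  | zero =>
    have hφ := Finsupp.linearCombination_id_surjective R X
    obtain ⟨r, hr⟩ := exists_retraction_ker_of_surjective (S := S) _ hφ
    refine (subsingleton_ext_one_iff_forall_exists_extension hφ).2 fun g => ?_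
    obtain ⟨h, hh⟩ := hY (Submodule.subtype _) r hr g
    exact ⟨h, LinearMap.congr_fun hh⟩
  | succ n ih =>
    have hφ := Finsupp.linearCombination_id_surjective R X
    obtain ⟨r, hr⟩ := exists_retraction_ker_of_surjective (S := S) _ hφ
    let φ : (X →₀ R) →ₗ[R] X := Finsupp.linearCombination R id
    have : Module.Projective S (X →₀ R) :=
      .of_equiv' (finsuppLequivDFinsupp S).symm
    have : Module.Projective S (LinearMap.ker φ) :=
      .of_split ((LinearMap.ker φ).subtype.restrictScalars S) r (LinearMap.ext hr)
    exact (subsingleton_ext_add_two_iff_ker hφ n).2 (ih _)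

end RelativelyInjective

section HomBimodule

/-- The space of `k`-linear maps `M → N` between left `A`-modules, with its structure of a left
module over the enveloping algebra `A ⊗[k] Aᵐᵒᵖ` coming from `(a ⊗ op b) • f = a • f (b • ·)`. It is
a type synonym so that this action cannot clash with a pointwise one. -/
def HomBimodule (k M N : Type*) [CommRing k] [AddCommGroup M] [Module k M] [AddCommGroup N]
    [Module k N] : Type _ :=
  M →ₗ[k] N

namespace HomBimodule

section

variable {k M N : Type*} [CommRing k] [AddCommGroup M] [Module k M] [AddCommGroup N] [Module k N]

instance : AddCommGroup (HomBimodule k M N) :=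
  inferInstanceAs (AddCommGroup (M →ₗ[k] N))

instance : FunLike (HomBimodule k M N) M N :=
  inferInstanceAs (FunLike (M →ₗ[k] N) M N)

instance : LinearMapClass (HomBimodule k M N) k M N :=
  inferInstanceAs (LinearMapClass (M →ₗ[k] N) k M N)

@[ext]
lemma ext {f g : HomBimodule k M N} (h : ∀ m, f m = g m) : f = g :=
  LinearMap.ext h

end

variable {k A M N : Type*} [CommRing k] [Ring A] [Algebra k A]
  [AddCommGroup M] [Module k M] [Module A M] [IsScalarTower k A M]
  [AddCommGroup N] [Module k N] [Module A N] [IsScalarTower k A N]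

noncomputable instance : Module (A ⊗[k] Aᵐᵒᵖ) (HomBimodule k M N) :=
  letI : Module Aᵐᵒᵖ (M →ₗ[k] N) := inferInstanceAs (Module Aᵈᵐᵃ (M →ₗ[k] N))
  haveI : IsScalarTower k Aᵐᵒᵖ (M →ₗ[k] N) :=
    ⟨fun c a f => LinearMap.ext fun m => by
      change f ((c • a).unop • m) = c • f (a.unop • m)
      rw [MulOpposite.unop_smul, smul_assoc, map_smul]⟩
  haveI : SMulCommClass A Aᵐᵒᵖ (M →ₗ[k] N) := ⟨fun _ _ _ => rfl⟩
  TensorProduct.Algebra.module (M := M →ₗ[k] N)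

lemma tmul_smul_apply (a : A) (b : Aᵐᵒᵖ) (f : HomBimodule k M N) (m : M) :
    ((a ⊗ₜ[k] b) • f) m = a • f (b.unop • m) :=
  letI : Module Aᵐᵒᵖ (M →ₗ[k] N) := inferInstanceAs (Module Aᵈᵐᵃ (M →ₗ[k] N))
  rfl

end HomBimodule

end HomBimodule

section Coinduced

lemma tmul_smul_eq_smul_one_tmul_smul {k A B X : Type*} [CommRing k] [Ring A] [Algebra k A]
    [Ring B] [Algebra k B] [AddCommGroup X] [Module (A ⊗[k] B) X] [Module A X]
    [IsScalarTower A (A ⊗[k] B) X] (a : A) (b : B) (x : X) :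
    (a ⊗ₜ[k] b) • x = a • ((1 : A) ⊗ₜ[k] b) • x := by
  rw [← smul_assoc, smul_tmul', smul_eq_mul, mul_one]

lemma map_smul_of_map_tmul_smul {k A B X Y : Type*} [CommRing k] [Ring A] [Algebra k A] [Ring B]
    [Algebra k B] [AddCommGroup X] [Module (A ⊗[k] B) X] [AddCommGroup Y] [Module (A ⊗[k] B) Y]
    (f : X →+ Y) (hf : ∀ (a : A) (b : B) (x : X), f ((a ⊗ₜ[k] b) • x) = (a ⊗ₜ[k] b) • f x)
    (s : A ⊗[k] B) (x : X) : f (s • x) = s • f x := by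
  induction s with
  | zero => rw [zero_smul, zero_smul, map_zero]
  | tmul a b => exact hf a b x
  | add s t hs ht => rw [add_smul, add_smul, map_add, hs, ht]

section

variable {k A V N F : Type*} [CommRing k] [Ring A] [Algebra k A] [AddCommGroup V] [Module k V]
  [AddCommGroup N] [Module k N] [Module A N] [IsScalarTower k A N]
  [AddCommGroup F] [Module (A ⊗[k] Aᵐᵒᵖ) F] [Module A F] [IsScalarTower A (A ⊗[k] Aᵐᵒᵖ) F]

/-- The bilinear pairing `(a, v) ↦ g ((1 ⊗ op a) • x) v` attached to an element `x` of a bimodule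
and a left linear map `g` into `Hom_k(V, N)`. -/
noncomputable def coinducedPairing (g : F →ₗ[A] V →ₗ[k] N) (x : F) : A →ₗ[k] V →ₗ[k] N where
  toFun a := g (((1 : A) ⊗ₜ[k] MulOpposite.op a) • x)
  map_add' a b := by rw [MulOpposite.op_add, tmul_add, add_smul, map_add]
  map_smul' c a := by
    rw [MulOpposite.op_smul, ← smul_tmul, tmul_smul_eq_smul_one_tmul_smul, map_smul,
      Algebra.smul_def, mul_one, algebraMap_smul, RingHom.id_apply]

lemma coinducedPairing_add (g : F →ₗ[A] V →ₗ[k] N) (x y : F) :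
    coinducedPairing g (x + y) = coinducedPairing g x + coinducedPairing g y :=
  LinearMap.ext fun _ => (congrArg g (smul_add _ x y)).trans (map_add g _ _)

lemma coinducedPairing_tmul_smul (g : F →ₗ[A] V →ₗ[k] N) (a b c : A) (x : F) :
    coinducedPairing g ((b ⊗ₜ[k] MulOpposite.op c) • x) a = b • coinducedPairing g x (c * a) := by
  change g _ = b • g _
  rw [← map_smul, ← tmul_smul_eq_smul_one_tmul_smul, smul_smul,
    Algebra.TensorProduct.tmul_mul_tmul, one_mul, MulOpposite.op_mul]

/-- The bimodule map `F → Hom_k(A ⊗ V, N)` adjoint to a left linear map `F → Hom_k(V, N)`: it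
exhibits `Hom_k(A ⊗ V, N)` as coinduced from the left module `Hom_k(V, N)`. -/
noncomputable def coinducedLift (g : F →ₗ[A] V →ₗ[k] N) :
    F →ₗ[A ⊗[k] Aᵐᵒᵖ] HomBimodule k (A ⊗[k] V) N :=
  letI H : F →+ HomBimodule k (A ⊗[k] V) N :=
    AddMonoidHom.mk' (fun x => TensorProduct.lift (coinducedPairing g x)) fun x y =>
      TensorProduct.ext' fun a v => congr($(coinducedPairing_add g x y) a v)
  { H with
    map_smul' := map_smul_of_map_tmul_smul H fun b c x => TensorProduct.ext' fun a v =>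
      congr($(coinducedPairing_tmul_smul g a b c.unop x) v) }

end

theorem isRelativelyInjective_homBimodule {k A V N : Type u} [CommRing k] [Ring A] [Algebra k A]
    [AddCommGroup V] [Module k V] [AddCommGroup N] [Module k N] [Module A N] [IsScalarTower k A N] :
    IsRelativelyInjective A (A ⊗[k] Aᵐᵒᵖ) (HomBimodule k (A ⊗[k] V) N) := by
  intro K F _ _ _ _ _ _ _ _ i r hr g
  let g₁ : K →ₗ[A] V →ₗ[k] N :=
    { toFun := fun y => (g y : A ⊗[k] V →ₗ[k] N) ∘ₗ TensorProduct.mk k A V 1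
      map_add' := fun x y => by rw [map_add]; rfl
      map_smul' := fun a y => LinearMap.ext fun v => by
        have hay : a • y = (a ⊗ₜ[k] (1 : Aᵐᵒᵖ)) • y := by
          rw [tmul_smul_eq_smul_one_tmul_smul, ← Algebra.TensorProduct.one_def, one_smul]
        rw [hay, map_smul]
        change ((a ⊗ₜ[k] (1 : Aᵐᵒᵖ)) • g y) (1 ⊗ₜ v) = a • g y (1 ⊗ₜ v)
        rw [HomBimodule.tmul_smul_apply, MulOpposite.unop_one, one_smul] }
  refine ⟨coinducedLift (g₁ ∘ₗ r), LinearMap.ext fun y => TensorProduct.ext' fun a v => ?_⟩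
  change g (r (((1 : A) ⊗ₜ[k] MulOpposite.op a) • i y)) (1 ⊗ₜ v) = g y (a ⊗ₜ v)
  rw [← map_smul, hr, map_smul, HomBimodule.tmul_smul_apply, MulOpposite.unop_op, one_smul,
    smul_tmul', smul_eq_mul, mul_one]

end Coinduced

section Comparison

open Abelian

variable {k : Type u} [Field k] {A : Type u} [Ring A] [Algebra k A]

lemma tmul_smul_self (a : A) (b : Aᵐᵒᵖ) (x : A) : (a ⊗ₜ[k] b) • x = a * x * b.unop :=
  (TensorProduct.Algebra.smul_def a b x).trans (mul_assoc a x b.unop).symm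

instance : IsScalarTower A (A ⊗[k] Aᵐᵒᵖ) A where
  smul_assoc a s x := by
    induction s with
    | zero =>
      have h := zero_smul (A ⊗[k] Aᵐᵒᵖ) x
      rw [smul_zero, h, smul_zero]
    | tmul b c => simp only [smul_tmul', tmul_smul_self, smul_eq_mul, mul_assoc]
    | add s t hs ht => rw [smul_add, add_smul, add_smul, smul_add, hs, ht]

namespace HomBimodule

variable {M M' N : Type*} [AddCommGroup M] [Module k M] [Module A M] [IsScalarTower k A M]
  [AddCommGroup M'] [Module k M'] [Module A M'] [IsScalarTower k A M']
  [AddCommGroup N] [Module k N] [Module A N] [IsScalarTower k A N]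

/-- Precomposition with `u : M' → M`, as a bimodule map `Hom_k(M, N) → Hom_k(M', N)`. -/
noncomputable def precomp (u : M' →ₗ[A] M) :
    HomBimodule k M N →ₗ[A ⊗[k] Aᵐᵒᵖ] HomBimodule k M' N :=
  letI H : HomBimodule k M N →+ HomBimodule k M' N :=
    AddMonoidHom.mk' (fun f => LinearMap.comp f (u.restrictScalars k)) fun _ _ => rfl
  { H with
    map_smul' := map_smul_of_map_tmul_smul H fun a b f => ext fun m => by
      rw [tmul_smul_apply]
      change ((a ⊗ₜ[k] b) • f) (u m) = a • f (u (b.unop • m))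
      rw [tmul_smul_apply, map_smul u] }

@[simp]
lemma precomp_apply (u : M' →ₗ[A] M) (f : HomBimodule k M N) (m : M') :
    precomp u f m = f (u m) :=
  rfl

lemma apply_eq_smul_apply_one (f : A →ₗ[A ⊗[k] Aᵐᵒᵖ] HomBimodule k M N) (a : A) (m : M) :
    f a m = a • f 1 m :=
  calc f a m = f ((a ⊗ₜ[k] (1 : Aᵐᵒᵖ)) • (1 : A)) m := by
        rw [tmul_smul_self, mul_one, MulOpposite.unop_one, mul_one]
    _ = a • f 1 m := by rw [map_smul, tmul_smul_apply, MulOpposite.unop_one, one_smul]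

lemma apply_eq_apply_one_smul (f : A →ₗ[A ⊗[k] Aᵐᵒᵖ] HomBimodule k M N) (a : A) (m : M) :
    f a m = f 1 (a • m) :=
  calc f a m = f (((1 : A) ⊗ₜ[k] MulOpposite.op a) • (1 : A)) m := by
        rw [tmul_smul_self, one_mul, MulOpposite.unop_op, one_mul]
    _ = f 1 (a • m) := by rw [map_smul, tmul_smul_apply, MulOpposite.unop_op, one_smul]

/-- The adjunction between `Hom(M, -)` and `- ⊗_A M` evaluated at the bimodule `A`: a bimodule map
`f : A → Hom(M, N)` amounts to the left linear map `f 1 : M → N`. -/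
noncomputable def linearMapEquiv :
    (M →ₗ[A] N) ≃ (A →ₗ[A ⊗[k] Aᵐᵒᵖ] HomBimodule k M N) where
  toFun g :=
    letI H : A →+ HomBimodule k M N :=
      AddMonoidHom.mk' (fun a => g.restrictScalars k ∘ₗ Algebra.lsmul k k M a) fun a b => by
        rw [map_add, LinearMap.comp_add]; rfl
    { H with
      map_smul' := map_smul_of_map_tmul_smul H fun a b x => ext fun m => by
        rw [tmul_smul_apply, tmul_smul_self]
        change g ((a * x * b.unop) • m) = a • g (x • b.unop • m)
        rw [mul_smul, mul_smul, map_smul] }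
  invFun f :=
    { toFun := f 1
      map_add' := map_add (f 1)
      map_smul' := fun a m =>
        (apply_eq_apply_one_smul f a m).symm.trans (apply_eq_smul_apply_one f a m) }
  left_inv g := LinearMap.ext fun m => congrArg g (one_smul A m)
  right_inv f := LinearMap.ext fun a => ext fun m => (apply_eq_apply_one_smul f a m).symm

lemma precomp_comp_linearMapEquiv (u : M' →ₗ[A] M) (g : M →ₗ[A] N) :
    precomp u ∘ₗ linearMapEquiv (k := k) g = linearMapEquiv (g ∘ₗ u) :=
  LinearMap.ext fun a => ext fun m => congrArg g (map_smul u a m).symm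

variable (k) in
lemma forall_exists_extension_iff {M' : Submodule A M} :
    (∀ g : M' →ₗ[A] N, ∃ h : M →ₗ[A] N, ∀ x : M', h x = g x) ↔
    ∀ g : A →ₗ[A ⊗[k] Aᵐᵒᵖ] HomBimodule k M' N, ∃ h : A →ₗ[A ⊗[k] Aᵐᵒᵖ] HomBimodule k M N,
      precomp M'.subtype ∘ₗ h = g :=
  (linearMapEquiv (M := M')).forall_congr fun g =>
    (linearMapEquiv (M := M)).exists_congr fun h => by
      rw [precomp_comp_linearMapEquiv, EmbeddingLike.apply_eq_iff_eq]
      exact (LinearMap.ext_iff (f := h ∘ₗ M'.subtype)).symm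

lemma precomp_injective {u : M' →ₗ[A] M} (hu : Function.Surjective u) :
    Function.Injective (precomp (k := k) (N := N) u) := fun f g h =>
  ext fun m => by
    obtain ⟨m, rfl⟩ := hu m
    exact congr($h m)

lemma precomp_subtype_surjective (M' : Submodule A M) :
    Function.Surjective (precomp (k := k) (N := N) M'.subtype) := fun f => by
  obtain ⟨g, hg⟩ := LinearMap.exists_extend (p := M'.restrictScalars k) f
  exact ⟨g, ext fun m => congr($hg m)⟩

lemma exact_precomp {u : M' →ₗ[A] M} (hu : Function.Surjective u) :
    Function.Exact (precomp (k := k) (N := N) u) (precomp (LinearMap.ker u).subtype) := fun f => by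
  constructor
  · intro hf
    have hker : LinearMap.ker (u.restrictScalars k) ≤ LinearMap.ker (f : M' →ₗ[k] N) :=
      fun m hm => congr($hf ⟨m, hm⟩)
    let e := (u.restrictScalars k).quotKerEquivOfSurjective hu
    refine ⟨(LinearMap.ker (u.restrictScalars k)).liftQ f hker ∘ₗ e.symm.toLinearMap,
      ext fun m => ?_⟩
    have : e.symm (u m) = Submodule.Quotient.mk m := e.symm_apply_eq.2 rfl
    change (LinearMap.ker _).liftQ f hker (e.symm (u m)) = f m
    rw [this]
    rfl
  · rintro ⟨g, rfl⟩
    refine ext fun m => ?_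
    rw [precomp_apply, precomp_apply, Submodule.subtype_apply, LinearMap.mem_ker.1 m.2, map_zero]
    rfl

/-- The short complex `Hom(M, N) → Hom(M', N) → Hom(ker u, N)` of `A ⊗[k] Aᵐᵒᵖ`-modules induced by
`u : M' → M`. -/
noncomputable def shortComplex (k : Type u) [Field k] {A M M' : Type u} [Ring A] [Algebra k A]
    [AddCommGroup M] [Module k M] [Module A M] [IsScalarTower k A M]
    [AddCommGroup M'] [Module k M'] [Module A M'] [IsScalarTower k A M']
    (u : M' →ₗ[A] M) (N : Type u) [AddCommGroup N] [Module k N] [Module A N]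
    [IsScalarTower k A N] : ShortComplex (ModuleCat.{u} (A ⊗[k] Aᵐᵒᵖ)) where
  X₁ := ModuleCat.of _ (HomBimodule k M N)
  X₂ := ModuleCat.of _ (HomBimodule k M' N)
  X₃ := ModuleCat.of _ (HomBimodule k (LinearMap.ker u) N)
  f := ModuleCat.ofHom (precomp u)
  g := ModuleCat.ofHom (precomp (LinearMap.ker u).subtype)
  zero := ModuleCat.hom_ext <| LinearMap.ext fun f => ext fun m =>
    (congrArg f m.2).trans (map_zero f)

lemma shortExact_shortComplex {A M M' N : Type u} [Ring A] [Algebra k A]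
    [AddCommGroup M] [Module k M] [Module A M] [IsScalarTower k A M]
    [AddCommGroup M'] [Module k M'] [Module A M'] [IsScalarTower k A M']
    [AddCommGroup N] [Module k N] [Module A N] [IsScalarTower k A N]
    {u : M' →ₗ[A] M} (hu : Function.Surjective u) : (shortComplex k u N).ShortExact :=
  ModuleCat.shortComplex_shortExact _ (exact_precomp hu) (precomp_injective hu)
    (precomp_subtype_surjective _)

end HomBimodule

variable (A) in
/-- The `A`-linear map `a ⊗ v ↦ a • g v` out of the induced module `A ⊗[k] V`. -/
noncomputable def inducedMap {V M : Type*} [AddCommGroup V] [Module k V] [AddCommGroup M]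
    [Module k M] [Module A M] [IsScalarTower k A M] (g : V →ₗ[k] M) : A ⊗[k] V →ₗ[A] M :=
  TensorProduct.AlgebraTensorModule.lift (LinearMap.toSpanSingleton A (V →ₗ[k] M) g)

@[simp]
lemma inducedMap_tmul {V M : Type*} [AddCommGroup V] [Module k V] [AddCommGroup M]
    [Module k M] [Module A M] [IsScalarTower k A M] (g : V →ₗ[k] M) (a : A) (v : V) :
    inducedMap A g (a ⊗ₜ v) = a • g v :=
  rfl

variable (k A) in
/-- The action map `A ⊗[k] M → M`. -/
noncomputable def actionMap (M : Type*) [AddCommGroup M] [Module k M] [Module A M]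
    [IsScalarTower k A M] : A ⊗[k] M →ₗ[A] M :=
  inducedMap A LinearMap.id

lemma actionMap_surjective (M : Type*) [AddCommGroup M] [Module k M] [Module A M]
    [IsScalarTower k A M] : Function.Surjective (actionMap k A M) :=
  fun m => ⟨1 ⊗ₜ m, one_smul A m⟩

variable {N : Type u} [AddCommGroup N] [Module k N] [Module A N] [IsScalarTower k A N]

variable (k A N) in
lemma subsingleton_ext_homBimodule_tensorProduct (V : Type u) [AddCommGroup V] [Module k V]
    (n : ℕ) : Subsingleton (Ext (ModuleCat.of (A ⊗[k] Aᵐᵒᵖ) A)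
      (ModuleCat.of (A ⊗[k] Aᵐᵒᵖ) (HomBimodule k (A ⊗[k] V) N)) (n + 1)) :=
  isRelativelyInjective_homBimodule.subsingleton_ext n A

theorem subsingleton_ext_homBimodule_iff (n : ℕ) (M : Type u) [AddCommGroup M] [Module k M]
    [Module A M] [IsScalarTower k A M] :
    Subsingleton (Ext (ModuleCat.of (A ⊗[k] Aᵐᵒᵖ) A)
      (ModuleCat.of (A ⊗[k] Aᵐᵒᵖ) (HomBimodule k M N)) (n + 1)) ↔
    Subsingleton (Ext (ModuleCat.of A M) (ModuleCat.of A N) (n + 1)) := by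
  induction n generalizing M with
  | zero =>
    have hφ := actionMap_surjective (k := k) (A := A) M
    have hS := HomBimodule.shortExact_shortComplex (k := k) (N := N) hφ
    have hvanish := subsingleton_ext_homBimodule_tensorProduct k A N M
    refine (subsingleton_ext_one_iff_forall_exists_lift hS (hvanish 0)).trans <| .trans
      ⟨fun hlift => ?_, fun hext g => ?_⟩
      (subsingleton_ext_one_iff_forall_exists_extension hφ).symm
    · refine (HomBimodule.forall_exists_extension_iff k).2 fun g => ?_
      obtain ⟨h, hh⟩ := hlift (ModuleCat.ofHom g)
      exact ⟨h.hom, ModuleCat.hom_ext_iff.1 hh⟩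
    · obtain ⟨h, hh⟩ := (HomBimodule.forall_exists_extension_iff k).1 hext g.hom
      exact ⟨ModuleCat.ofHom h, ModuleCat.hom_ext hh⟩
  | succ n ih =>
    have hφ := actionMap_surjective (k := k) (A := A) M
    have hS := HomBimodule.shortExact_shortComplex (k := k) (N := N) hφ
    have hvanish := subsingleton_ext_homBimodule_tensorProduct k A N M
    exact (subsingleton_ext_X₁_iff_X₃ hS hvanish n).trans <| (ih _).trans
      (subsingleton_ext_add_two_iff_ker hφ n).symm

end Comparison

section Grading

open DirectSum

section Decomposition

variable {ι k X : Type*} [DecidableEq ι] [CommRing k] [AddCommGroup X] [Module k X]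

section

variable (ℳ : ι → Submodule k X) [Decomposition ℳ]

/-- The `k`-linear projection of a graded module onto its component of degree `n`, as an
endomorphism. -/
def componentProj (n : ι) : X →ₗ[k] X :=
  (ℳ n).subtype ∘ₗ DirectSum.component k ι (fun i => ℳ i) n ∘ₗ
    (decomposeLinearEquiv ℳ).toLinearMap

lemma componentProj_mem (n : ι) (x : X) : componentProj ℳ n x ∈ ℳ n :=
  (decompose ℳ x n).2

variable {ℳ} in
lemma componentProj_of_mem {i : ι} {x : X} (hx : x ∈ ℳ i) (n : ι) :
    componentProj ℳ n x = if i = n then x else 0 := by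
  split_ifs with h
  · subst h; exact decompose_of_mem_same ℳ hx
  · exact decompose_of_mem_ne ℳ hx h

lemma exists_sum_componentProj_eq (x : X) : ∃ s : Finset ι, ∑ n ∈ s, componentProj ℳ n x = x := by
  classical exact ⟨_, sum_support_decompose ℳ x⟩

end

lemma isInternal_of_proj {ℳ : ι → Submodule k X} (p : ι → X →ₗ[k] X)
    (hp : ∀ i, ∀ x ∈ ℳ i, ∀ n, p n x = if i = n then x else 0) (htop : ⨆ i, ℳ i = ⊤) :
    IsInternal ℳ := by
  refine isInternal_submodule_of_iSupIndep_of_iSup_eq_top (fun n => ?_) htop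
  refine Submodule.disjoint_def.2 fun x hx hx' => ?_
  have hle : ⨆ i, ⨆ (_ : i ≠ n), ℳ i ≤ LinearMap.ker (p n) :=
    iSup₂_le fun i hi y hy => (hp i y hy n).trans (if_neg hi)
  have hpx : p n x = x := (hp n x hx n).trans (if_pos rfl)
  exact hpx.symm.trans (hle hx')

variable (ℳ : ι → Submodule k X) [Decomposition ℳ]

lemma isInternal_comap {Y : Type*} [AddCommGroup Y] [Module k Y] {f : Y →ₗ[k] X}
    (hf : Function.Injective f)
    (hrange : ∀ y n, componentProj ℳ n (f y) ∈ LinearMap.range f) :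
    IsInternal fun n => (ℳ n).comap f := by
  let p (n : ι) : Y →ₗ[k] Y := (LinearEquiv.ofInjective f hf).symm.toLinearMap ∘ₗ
    (componentProj ℳ n ∘ₗ f).codRestrict (LinearMap.range f) fun y => hrange y n
  have f_p (n : ι) (y : Y) : f (p n y) = componentProj ℳ n (f y) :=
    congrArg Subtype.val ((LinearEquiv.ofInjective f hf).apply_symm_apply _)
  refine isInternal_of_proj p (fun i y hy n => hf ?_) (eq_top_iff.2 fun y _ => ?_)
  · rw [f_p, componentProj_of_mem (Submodule.mem_comap.1 hy), apply_ite f, map_zero]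
  · obtain ⟨s, hs⟩ := exists_sum_componentProj_eq ℳ (f y)
    have hy : ∑ n ∈ s, p n y = y := hf <| by simpa only [map_sum, f_p] using hs
    rw [← hy]
    refine sum_mem fun n _ => Submodule.mem_iSup_of_mem n ?_
    rw [Submodule.mem_comap, f_p]
    exact componentProj_mem ℳ n _

end Decomposition

section Tensor

variable {k V W : Type*} [CommRing k] [AddCommGroup V] [Module k V] [AddCommGroup W] [Module k W]

/-- The total grading on the tensor product of two graded modules. -/
def tensorGrading (𝒱 : ℕ → Submodule k V) (𝒲 : ℕ → Submodule k W) (n : ℕ) :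
    Submodule k (V ⊗[k] W) :=
  Submodule.span k {z | ∃ i j, i + j = n ∧ ∃ v ∈ 𝒱 i, ∃ w ∈ 𝒲 j, v ⊗ₜ[k] w = z}

variable {𝒱 : ℕ → Submodule k V} {𝒲 : ℕ → Submodule k W}

lemma tmul_mem_tensorGrading {i j : ℕ} {v : V} (hv : v ∈ 𝒱 i) {w : W} (hw : w ∈ 𝒲 j) :
    v ⊗ₜ[k] w ∈ tensorGrading 𝒱 𝒲 (i + j) :=
  Submodule.subset_span ⟨i, j, rfl, v, hv, w, hw, rfl⟩

lemma tensorGrading_le_iff {n : ℕ} {P : Submodule k (V ⊗[k] W)} :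
    tensorGrading 𝒱 𝒲 n ≤ P ↔ ∀ i j, i + j = n → ∀ v ∈ 𝒱 i, ∀ w ∈ 𝒲 j, v ⊗ₜ[k] w ∈ P := by
  refine Submodule.span_le.trans ⟨fun h i j hij v hv w hw => h ⟨i, j, hij, v, hv, w, hw, rfl⟩, ?_⟩
  rintro h _ ⟨i, j, hij, v, hv, w, hw, rfl⟩
  exact h i j hij v hv w hw

lemma isInternal_tensorGrading [Decomposition 𝒱] [Decomposition 𝒲] :
    IsInternal (tensorGrading 𝒱 𝒲) := by
  let p (n : ℕ) : V ⊗[k] W →ₗ[k] V ⊗[k] W :=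
    ∑ ij ∈ Finset.HasAntidiagonal.antidiagonal n,
      TensorProduct.map (componentProj 𝒱 ij.1) (componentProj 𝒲 ij.2)
  refine isInternal_of_proj p (fun m z hz n => ?_) (eq_top_iff.2 fun z _ => ?_)
  · suffices hle : tensorGrading 𝒱 𝒲 m ≤
        LinearMap.eqLocus (p n) (if m = n then LinearMap.id else 0) by
      refine (hle hz).trans ?_
      split_ifs <;> rfl
    refine tensorGrading_le_iff.2 fun i j hij v hv w hw => ?_
    rw [LinearMap.mem_eqLocus, LinearMap.sum_apply]
    simp only [TensorProduct.map_tmul, componentProj_of_mem hv, componentProj_of_mem hw]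
    have hsummand (ij : ℕ × ℕ) : ((if i = ij.1 then v else 0) ⊗ₜ[k] if j = ij.2 then w else 0) =
        if (i, j) = ij then v ⊗ₜ[k] w else 0 := by
      rw [TensorProduct.ite_tmul, TensorProduct.tmul_ite, ← ite_and]
      exact if_congr (by rw [Prod.ext_iff]) rfl rfl
    simp_rw [hsummand, Finset.sum_ite_eq, Finset.HasAntidiagonal.mem_antidiagonal, hij]
    split_ifs <;> rfl
  · induction z with
    | zero => exact zero_mem _
    | add z z' hz hz' => exact add_mem (hz trivial) (hz' trivial)
    | tmul v w =>
      obtain ⟨s, hs⟩ := exists_sum_componentProj_eq 𝒱 v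
      obtain ⟨t, ht⟩ := exists_sum_componentProj_eq 𝒲 w
      rw [← hs, ← ht, TensorProduct.sum_tmul]
      refine sum_mem fun i _ => ?_
      rw [TensorProduct.tmul_sum]
      exact sum_mem fun j _ => Submodule.mem_iSup_of_mem (i + j) <|
        tmul_mem_tensorGrading (componentProj_mem 𝒱 i v) (componentProj_mem 𝒲 j w)

noncomputable instance [Decomposition 𝒱] [Decomposition 𝒲] :
    Decomposition (tensorGrading 𝒱 𝒲) :=
  isInternal_tensorGrading.chooseDecomposition

end Tensor

section Algebra

variable {k A B : Type*} [CommRing k] [Ring A] [Algebra k A] [Ring B] [Algebra k B]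
  {𝒜 : ℕ → Submodule k A} {ℬ : ℕ → Submodule k B}

instance [SetLike.GradedMonoid 𝒜] {W : Type*} [AddCommGroup W] [Module k W]
    {𝒲 : ℕ → Submodule k W} : SetLike.GradedSMul 𝒜 (tensorGrading 𝒜 𝒲) where
  smul_mem {l n a} z ha hz := by
    suffices hle : tensorGrading 𝒜 𝒲 n ≤
        (tensorGrading 𝒜 𝒲 (l + n)).comap (Algebra.lsmul k k (A ⊗[k] W) a) from hle hz
    refine tensorGrading_le_iff.2 fun i j hij b hb w hw => ?_
    change a • b ⊗ₜ[k] w ∈ tensorGrading 𝒜 𝒲 (l + n)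
    rw [smul_tmul', ← hij, ← add_assoc]
    exact tmul_mem_tensorGrading (SetLike.mul_mem_graded ha hb) hw

instance [SetLike.GradedMonoid 𝒜] [SetLike.GradedMonoid ℬ] :
    SetLike.GradedMonoid (tensorGrading 𝒜 ℬ) where
  one_mem := tmul_mem_tensorGrading (i := 0) (j := 0) SetLike.GradedOne.one_mem
    SetLike.GradedOne.one_mem
  mul_mem {m n} x y hx hy := by
    suffices hle : tensorGrading 𝒜 ℬ m ≤
        (tensorGrading 𝒜 ℬ (m + n)).comap (LinearMap.mulRight k y) from hle hx
    refine tensorGrading_le_iff.2 fun i j hij a ha b hb => ?_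
    suffices hle : tensorGrading 𝒜 ℬ n ≤
        (tensorGrading 𝒜 ℬ (m + n)).comap (LinearMap.mulLeft k (a ⊗ₜ b)) from hle hy
    refine tensorGrading_le_iff.2 fun i' j' hij' a' ha' b' hb' => ?_
    rw [Submodule.mem_comap, LinearMap.mulLeft_apply, Algebra.TensorProduct.tmul_mul_tmul,
      ← hij, ← hij', add_add_add_comm]
    exact tmul_mem_tensorGrading (SetLike.mul_mem_graded ha ha') (SetLike.mul_mem_graded hb hb')

noncomputable instance [GradedAlgebra 𝒜] [GradedAlgebra ℬ] : GradedAlgebra (tensorGrading 𝒜 ℬ) where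

lemma tensorGrading_zero_eq_one [SetLike.GradedMonoid 𝒜] [SetLike.GradedMonoid ℬ]
    (h𝒜 : 𝒜 0 = 1) (hℬ : ℬ 0 = 1) :
    tensorGrading 𝒜 ℬ 0 = 1 := by
  refine le_antisymm (tensorGrading_le_iff.2 fun i j hij a ha b hb => ?_)
    (Submodule.one_le.2 SetLike.GradedOne.one_mem)
  obtain ⟨rfl, rfl⟩ := Nat.add_eq_zero_iff.1 hij
  rw [h𝒜] at ha
  rw [hℬ] at hb
  obtain ⟨c, rfl⟩ := Submodule.mem_one.1 ha
  obtain ⟨d, rfl⟩ := Submodule.mem_one.1 hb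
  refine Submodule.mem_one.2 ⟨c * d, ?_⟩
  rw [map_mul, Algebra.TensorProduct.algebraMap_apply, Algebra.TensorProduct.algebraMap_apply',
    Algebra.TensorProduct.tmul_mul_tmul, one_mul, mul_one]

variable (𝒜) in
/-- The grading on the opposite of a graded algebra. -/
def opGrading (n : ℕ) : Submodule k Aᵐᵒᵖ :=
  (𝒜 n).comap (MulOpposite.opLinearEquiv k).symm.toLinearMap

noncomputable instance [GradedAlgebra 𝒜] : GradedAlgebra (opGrading 𝒜) where
  one_mem := SetLike.GradedOne.one_mem (A := 𝒜)
  mul_mem i j a b ha hb := by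
    rw [add_comm]
    exact SetLike.mul_mem_graded (A := 𝒜) hb ha
  toDecomposition := (isInternal_comap 𝒜 (MulOpposite.opLinearEquiv k).symm.injective
    fun y n => ⟨MulOpposite.op _, rfl⟩).chooseDecomposition

lemma opGrading_zero_eq_one (h : 𝒜 0 = 1) : opGrading 𝒜 0 = 1 := by
  ext x
  rw [opGrading, Submodule.mem_comap, h, Submodule.mem_one, Submodule.mem_one]
  exact exists_congr fun c => MulOpposite.op_injective.eq_iff.symm

end Algebra

end Grading

section EnvelopingGrading

variable {k A : Type u} [Field k] [Ring A] [Algebra k A] {𝒜 : ℕ → Submodule k A}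

instance : IsScalarTower k (A ⊗[k] Aᵐᵒᵖ) A where
  smul_assoc c s x := by
    rw [← algebraMap_smul A c s, smul_assoc, algebraMap_smul]

instance [SetLike.GradedMonoid 𝒜] : SetLike.GradedSMul (tensorGrading 𝒜 (opGrading 𝒜)) 𝒜 where
  smul_mem {m n} r x hr hx := by
    suffices hle : tensorGrading 𝒜 (opGrading 𝒜) m ≤
        (𝒜 (m + n)).comap (LinearMap.toSpanSingleton (A ⊗[k] Aᵐᵒᵖ) A x |>.restrictScalars k) from
      hle hr
    refine tensorGrading_le_iff.2 fun i j hij a ha b hb => ?_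
    change (a ⊗ₜ[k] b) • x ∈ 𝒜 (m +ᵥ n)
    rw [tmul_smul_self, vadd_eq_add, ← hij, add_right_comm]
    exact SetLike.mul_mem_graded (SetLike.mul_mem_graded ha hx) hb

end EnvelopingGrading

section Nakayama

open DirectSum

variable {k R : Type*} [CommRing k] [Ring R] [Algebra k R] (ℬ : ℕ → Submodule k R)
  [GradedAlgebra ℬ] (X : Type*) [AddCommGroup X] [Module R X]

/-- The submodule `R₊ X` of decomposable elements of a module `X` over a graded ring `R`. -/
def decomposables : Submodule R X :=
  (HomogeneousIdeal.irrelevant ℬ).toIdeal • ⊤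

variable {ℬ X}

lemma smul_mem_decomposables {r : R} (hr : r ∈ HomogeneousIdeal.irrelevant ℬ) (x : X) :
    r • x ∈ decomposables ℬ X :=
  Submodule.smul_mem_smul hr trivial

lemma map_mem_decomposables {Y : Type*} [AddCommGroup Y] [Module R Y] (f : X →ₗ[R] Y) {x : X}
    (hx : x ∈ decomposables ℬ X) : f x ∈ decomposables ℬ Y := by
  have hfx := Submodule.mem_map_of_mem (f := f) hx
  rw [decomposables, Submodule.map_smul''] at hfx
  exact Submodule.smul_mono le_rfl le_top hfx

lemma decomposables_eq_bot_of_le_annihilator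
    (hX : (HomogeneousIdeal.irrelevant ℬ).toIdeal ≤ Module.annihilator R X) :
    decomposables ℬ X = ⊥ :=
  eq_bot_iff.2 <| Submodule.smul_le.2 fun _ hr x _ => Module.mem_annihilator.1 (hX hr) x

variable [Module k X] {ℳ : ℕ → Submodule k X} [Decomposition ℳ]

lemma mem_of_mem_decomposables {P : AddSubmonoid X}
    (hP : ∀ i > 0, ∀ r ∈ ℬ i, ∀ j, ∀ x ∈ ℳ j, r • x ∈ P) {x : X}
    (hx : x ∈ decomposables ℬ X) : x ∈ P := by
  refine Submodule.smul_induction_on hx (fun r hr x _ => ?_) fun _ _ => add_mem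
  suffices hle : (HomogeneousIdeal.irrelevant ℬ).toAddSubmonoid ≤
      P.comap ((AddMonoidHom.flip (smulAddHom R X)) x) from hle hr
  refine (HomogeneousIdeal.toAddSubmonoid_irrelevant_le ℬ).2 fun i hi r hr => ?_
  obtain ⟨s, hs⟩ := exists_sum_componentProj_eq ℳ x
  change r • x ∈ P
  rw [← hs, Finset.smul_sum]
  exact sum_mem fun j _ => hP i hi r hr j _ (componentProj_mem ℳ j x)

variable [SetLike.GradedSMul ℬ ℳ]

lemma isHomogeneous_decomposables : SetLike.IsHomogeneous ℳ (decomposables ℬ X) := by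
  intro n x hx
  refine mem_of_mem_decomposables (ℳ := ℳ)
    (P := (decomposables ℬ X).toAddSubmonoid.comap (componentProj ℳ n))
    (fun i hi r hr j x hx => ?_) hx
  change componentProj ℳ n (r • x) ∈ decomposables ℬ X
  rw [componentProj_of_mem (SetLike.GradedSMul.smul_mem hr hx)]
  split_ifs
  · exact smul_mem_decomposables (HomogeneousIdeal.mem_irrelevant_of_mem ℬ hi hr) x
  · exact zero_mem _

lemma componentProj_mem_of_forall_lt {P : Submodule R X} {n : ℕ}
    (hP : ∀ m < n, ∀ x ∈ ℳ m, x ∈ P) {x : X} (hx : x ∈ decomposables ℬ X) :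
    componentProj ℳ n x ∈ P := by
  refine mem_of_mem_decomposables (ℳ := ℳ)
    (P := P.toAddSubmonoid.comap (componentProj ℳ n)) (fun i hi r hr j x hx => ?_) hx
  change componentProj ℳ n (r • x) ∈ P
  rw [componentProj_of_mem (SetLike.GradedSMul.smul_mem hr hx)]
  split_ifs with hij
  · exact P.smul_mem r (hP j (by rw [vadd_eq_add] at hij; lia) x hx)
  · exact zero_mem _

theorem eq_top_of_sup_decomposables_eq_top {P : Submodule R X} (hP : SetLike.IsHomogeneous ℳ P)
    (htop : P ⊔ decomposables ℬ X = ⊤) : P = ⊤ := by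
  have hle (n : ℕ) : ∀ x ∈ ℳ n, x ∈ P := by
    induction n using Nat.strong_induction_on with
    | h n ih =>
      intro x hx
      obtain ⟨y, hy, z, hz, rfl⟩ := Submodule.mem_sup.1 (htop ▸ Submodule.mem_top : x ∈ _)
      rw [← (componentProj_of_mem hx n).trans (if_pos rfl), map_add]
      exact add_mem (hP n hy) (componentProj_mem_of_forall_lt ih hz)
  refine eq_top_iff.2 fun x _ => ?_
  obtain ⟨s, hs⟩ := exists_sum_componentProj_eq ℳ x
  rw [← hs]
  exact sum_mem fun n _ => hle n _ (componentProj_mem ℳ n x)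

theorem subsingleton_of_decomposables_eq_top (ℳ : ℕ → Submodule k X) [Decomposition ℳ]
    [SetLike.GradedSMul ℬ ℳ] (h : decomposables ℬ X = ⊤) : Subsingleton X := by
  have hbot : SetLike.IsHomogeneous ℳ (⊥ : Submodule R X) := fun n x hx => by
    rw [(Submodule.mem_bot R).1 hx, decompose_zero]; rfl
  have hbot_eq_top := eq_top_of_sup_decomposables_eq_top (ℬ := ℬ) hbot (by rw [h, sup_top_eq])
  exact (Submodule.subsingleton_iff R).1 (subsingleton_of_bot_eq_top hbot_eq_top)

end Nakayama

section HomogeneousMaps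

open DirectSum

variable {k X Y : Type*} [CommRing k] [AddCommGroup X] [Module k X] [AddCommGroup Y] [Module k Y]
  {ℳ : ℕ → Submodule k X} {𝒩 : ℕ → Submodule k Y} [Decomposition ℳ] [Decomposition 𝒩]

lemma map_componentProj {f : X →ₗ[k] Y} (hf : ∀ n, ∀ x ∈ ℳ n, f x ∈ 𝒩 n) (n : ℕ) (x : X) :
    f (componentProj ℳ n x) = componentProj 𝒩 n (f x) := by
  induction x using Decomposition.inductionOn ℳ with
  | zero => simp only [map_zero]
  | @homogeneous i x =>
    rw [componentProj_of_mem x.2, componentProj_of_mem (hf i x x.2), apply_ite f, map_zero]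
  | add x y hx hy => rw [map_add, map_add, map_add, map_add, hx, hy]

end HomogeneousMaps

section HomogeneousSubmodules

open DirectSum

section

variable {k R X : Type*} [CommRing k] [Ring R] [Algebra k R] [AddCommGroup X] [Module k X]
  [Module R X] [IsScalarTower k R X]

/-- The grading induced on a submodule; it is only meaningful for a homogeneous submodule. -/
def submoduleGrading (ℳ : ℕ → Submodule k X) (P : Submodule R X) (n : ℕ) : Submodule k P :=
  (ℳ n).comap (P.subtype.restrictScalars k)

lemma isInternal_submoduleGrading {ℳ : ℕ → Submodule k X} [Decomposition ℳ] {P : Submodule R X}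
    (hP : SetLike.IsHomogeneous ℳ P) : IsInternal (submoduleGrading ℳ P) :=
  isInternal_comap ℳ P.injective_subtype fun x n => ⟨⟨_, hP n x.2⟩, rfl⟩

instance {ℬ : ℕ → Submodule k R} {ℳ : ℕ → Submodule k X} [SetLike.GradedSMul ℬ ℳ]
    {P : Submodule R X} : SetLike.GradedSMul ℬ (submoduleGrading ℳ P) where
  smul_mem _ _ _ _ hr hx := SetLike.GradedSMul.smul_mem (B := ℳ) hr hx

end

variable {k X : Type*} [Field k] [AddCommGroup X] [Module k X] {ℳ : ℕ → Submodule k X}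
  [Decomposition ℳ]

theorem exists_isHomogeneous_isCompl {D : Submodule k X} (hD : SetLike.IsHomogeneous ℳ D) :
    ∃ W : Submodule k X, SetLike.IsHomogeneous ℳ W ∧ IsCompl D W := by
  choose C hC using fun n => (D ⊓ ℳ n).exists_isCompl
  let W : Submodule k X := ⨅ n, (C n).comap (componentProj ℳ n)
  have mem_W {n : ℕ} {x : X} (hx : x ∈ ℳ n) (hxC : x ∈ C n) : x ∈ W := by
    refine Submodule.mem_iInf _ |>.2 fun m => ?_
    rw [Submodule.mem_comap, componentProj_of_mem hx]
    split_ifs with h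
    exacts [h ▸ hxC, zero_mem _]
  refine ⟨W, fun n x hx => mem_W (componentProj_mem ℳ n x) (Submodule.mem_iInf _ |>.1 hx n),
    Submodule.disjoint_def.2 fun x hxD hxW => ?_, codisjoint_iff.2 <| eq_top_iff.2 fun x _ => ?_⟩
  · obtain ⟨s, hs⟩ := exists_sum_componentProj_eq ℳ x
    rw [← hs]
    exact Finset.sum_eq_zero fun n _ => Submodule.disjoint_def.1 (hC n).disjoint _
      ⟨hD n hxD, componentProj_mem ℳ n x⟩ (Submodule.mem_iInf _ |>.1 hxW n)
  · obtain ⟨s, hs⟩ := exists_sum_componentProj_eq ℳ x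
    rw [← hs]
    refine sum_mem fun n _ => ?_
    obtain ⟨d, ⟨hd, hdn⟩, c, hc, hdc⟩ := Submodule.mem_sup.1
      ((hC n).sup_eq_top ▸ Submodule.mem_top : componentProj ℳ n x ∈ (D ⊓ ℳ n) ⊔ C n)
    have hcn : c ∈ ℳ n := by
      rw [← add_sub_cancel_left d c, hdc]
      exact sub_mem (componentProj_mem ℳ n x) hdn
    rw [← hdc]
    exact Submodule.add_mem_sup hd (mem_W hcn hc)

end HomogeneousSubmodules

section MinimalCover

open DirectSum Abelian

variable {k R X W : Type u} [Field k] [Ring R] [Algebra k R] {ℬ : ℕ → Submodule k R}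
  [AddCommGroup X] [Module k X] [Module R X] [IsScalarTower k R X] {ℳ : ℕ → Submodule k X}
  [AddCommGroup W] [Module k W] {𝒲 : ℕ → Submodule k W}

lemma inducedMap_mem [SetLike.GradedSMul ℬ ℳ] {g : W →ₗ[k] X} (hg : ∀ n, ∀ w ∈ 𝒲 n, g w ∈ ℳ n)
    (n : ℕ) : ∀ z ∈ tensorGrading ℬ 𝒲 n, inducedMap R g z ∈ ℳ n := by
  suffices hle : tensorGrading ℬ 𝒲 n ≤ (ℳ n).comap ((inducedMap R g).restrictScalars k) from hle
  refine tensorGrading_le_iff.2 fun i j hij r hr w hw => ?_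
  rw [← hij]
  exact SetLike.GradedSMul.smul_mem hr (hg j w hw)

variable [GradedAlgebra ℬ]

lemma exists_sub_algebraMap_mem_irrelevant (hconn : ℬ 0 = 1) (r : R) :
    ∃ c : k, r - algebraMap k R c ∈ HomogeneousIdeal.irrelevant ℬ := by
  obtain ⟨c, hc⟩ := Submodule.mem_one.1 (hconn ▸ componentProj_mem ℬ 0 r)
  refine ⟨c, (HomogeneousIdeal.mem_irrelevant_iff ℬ _).2 ?_⟩
  change componentProj ℬ 0 (r - algebraMap k R c) = 0
  rw [map_sub, hc, componentProj_of_mem (componentProj_mem ℬ 0 r), if_pos rfl, sub_self]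

lemma exists_sub_one_tmul_mem_decomposables (hconn : ℬ 0 = 1) (z : R ⊗[k] W) :
    ∃ w : W, z - 1 ⊗ₜ w ∈ decomposables ℬ (R ⊗[k] W) := by
  induction z with
  | zero => exact ⟨0, by rw [tmul_zero, sub_zero]; exact zero_mem _⟩
  | tmul r w =>
    obtain ⟨c, hc⟩ := exists_sub_algebraMap_mem_irrelevant hconn r
    refine ⟨c • w, ?_⟩
    convert smul_mem_decomposables hc ((1 : R) ⊗ₜ[k] w) using 1
    rw [smul_tmul', smul_eq_mul, mul_one, sub_tmul, Algebra.algebraMap_eq_smul_one, smul_tmul]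
  | add z z' hz hz' =>
    obtain ⟨w, hw⟩ := hz
    obtain ⟨w', hw'⟩ := hz'
    refine ⟨w + w', ?_⟩
    rw [tmul_add, add_sub_add_comm]
    exact add_mem hw hw'

theorem inducedMap_surjective [Decomposition ℳ] [Decomposition 𝒲] [SetLike.GradedSMul ℬ ℳ]
    {g : W →ₗ[k] X} (hg : ∀ n, ∀ w ∈ 𝒲 n, g w ∈ ℳ n)
    (hsup : (decomposables ℬ X).restrictScalars k ⊔ LinearMap.range g = ⊤) :
    Function.Surjective (inducedMap R g) := by
  refine LinearMap.range_eq_top.1 <|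
    eq_top_of_sup_decomposables_eq_top (ℬ := ℬ) (ℳ := ℳ) ?_ (eq_top_iff.2 fun x _ => ?_)
  · rintro n _ ⟨z, rfl⟩
    exact ⟨_, map_componentProj (𝒩 := ℳ) (f := (inducedMap R g).restrictScalars k)
      (inducedMap_mem (ℬ := ℬ) hg) n z⟩
  · obtain ⟨d, hd, _, ⟨w, rfl⟩, rfl⟩ := Submodule.mem_sup.1 (hsup ▸ Submodule.mem_top : x ∈ _)
    exact add_mem (Submodule.mem_sup_right hd)
      (Submodule.mem_sup_left ⟨1 ⊗ₜ w, one_smul R (g w)⟩)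

theorem ker_inducedMap_le_decomposables (hconn : ℬ 0 = 1) {g : W →ₗ[k] X}
    (hg : Function.Injective g)
    (hdisj : Disjoint ((decomposables ℬ X).restrictScalars k) (LinearMap.range g)) :
    LinearMap.ker (inducedMap R g) ≤ decomposables ℬ (R ⊗[k] W) := by
  intro z hz
  obtain ⟨w, hw⟩ := exists_sub_one_tmul_mem_decomposables hconn z
  have hgw : g w ∈ decomposables ℬ X := by
    have hmem := neg_mem (map_mem_decomposables (inducedMap R g) hw)
    rwa [map_sub, LinearMap.mem_ker.1 hz, inducedMap_tmul, one_smul, zero_sub, neg_neg] at hmem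
  have hw₀ : w = 0 := hg <| (Submodule.disjoint_def.1 hdisj _ hgw ⟨w, rfl⟩).trans (map_zero g).symm
  rwa [hw₀, tmul_zero, sub_zero] at hw

variable {T : Type u} [AddCommGroup T] [Module R T]

theorem exists_linearMap_ne_zero_of_decomposables_ne_top [Nontrivial T] (hconn : ℬ 0 = 1)
    (hT : (HomogeneousIdeal.irrelevant ℬ).toIdeal ≤ Module.annihilator R T)
    (hX : decomposables ℬ X ≠ ⊤) : ∃ f : X →ₗ[R] T, f ≠ 0 := by
  obtain ⟨ℓ, hℓ, hker⟩ := ((decomposables ℬ X).restrictScalars k).exists_le_ker_of_lt_top <|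
    lt_top_iff_ne_top.2 fun h => hX ((Submodule.restrictScalars_eq_top_iff k R X).1 h)
  obtain ⟨t, ht⟩ := exists_ne (0 : T)
  have hsmul (r : R) (x : X) :
      algebraMap k R (ℓ (r • x)) • t = r • algebraMap k R (ℓ x) • t := by
    obtain ⟨c, hc⟩ := exists_sub_algebraMap_mem_irrelevant hconn r
    obtain ⟨s, rfl⟩ : ∃ s, r = s + algebraMap k R c := ⟨_, (sub_add_cancel _ _).symm⟩
    rw [add_sub_cancel_right] at hc
    have hsx : ℓ (s • x) = 0 := hker (smul_mem_decomposables hc x)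
    rw [add_smul, map_add, hsx, zero_add, algebraMap_smul R c x, map_smul, smul_eq_mul, map_mul,
      mul_smul, add_smul, Module.mem_annihilator.1 (hT hc), zero_add]
  let f : X →ₗ[R] T :=
    { toFun := fun x => algebraMap k R (ℓ x) • t
      map_add' := fun x y => by rw [map_add, map_add, add_smul]
      map_smul' := hsmul }
  refine ⟨f, fun hf => ?_⟩
  refine hℓ (LinearMap.ext fun x => by_contra fun hx => ht ?_)
  exact ((IsUnit.mk0 (ℓ x) hx).map (algebraMap k R)).smul_eq_zero.1 congr($hf x)

theorem decomposables_ker_eq_top {F X : Type u} [Nontrivial T] (hconn : ℬ 0 = 1)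
    (hT : (HomogeneousIdeal.irrelevant ℬ).toIdeal ≤ Module.annihilator R T)
    [AddCommGroup F] [Module k F] [Module R F] [IsScalarTower k R F] [Module.Projective R F]
    [AddCommGroup X] [Module R X] {φ : F →ₗ[R] X} (hφ : Function.Surjective φ)
    (hker : LinearMap.ker φ ≤ decomposables ℬ F)
    (hExt : Subsingleton (Ext (ModuleCat.of R X) (ModuleCat.of R T) 1)) :
    decomposables ℬ (LinearMap.ker φ) = ⊤ := by
  by_contra hne
  obtain ⟨f, hf⟩ := exists_linearMap_ne_zero_of_decomposables_ne_top hconn hT hne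
  obtain ⟨h, hh⟩ := (subsingleton_ext_one_iff_forall_exists_extension hφ).1 hExt f
  refine hf (LinearMap.ext fun x => ?_)
  have hx := map_mem_decomposables h (hker x.2)
  rwa [decomposables_eq_bot_of_le_annihilator hT, Submodule.mem_bot, hh] at hx

lemma isHomogeneous_ker_inducedMap [Decomposition ℳ] [Decomposition 𝒲] [SetLike.GradedSMul ℬ ℳ]
    {g : W →ₗ[k] X} (hg : ∀ n, ∀ w ∈ 𝒲 n, g w ∈ ℳ n) :
    SetLike.IsHomogeneous (tensorGrading ℬ 𝒲) (LinearMap.ker (inducedMap R g)) := fun n z hz => by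
  have hcomm := map_componentProj (𝒩 := ℳ) (f := (inducedMap R g).restrictScalars k)
    (inducedMap_mem (ℬ := ℬ) hg) n z
  exact hcomm.trans <| (congrArg _ hz).trans (map_zero _)

theorem projective_of_subsingleton_ext_one [Nontrivial T] (hconn : ℬ 0 = 1)
    (hT : (HomogeneousIdeal.irrelevant ℬ).toIdeal ≤ Module.annihilator R T)
    (ℳ : ℕ → Submodule k X) [Decomposition ℳ] [SetLike.GradedSMul ℬ ℳ]
    (hExt : Subsingleton (Ext (ModuleCat.of R X) (ModuleCat.of R T) 1)) :
    Module.Projective R X := by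
  obtain ⟨W, hW, hcompl⟩ := exists_isHomogeneous_isCompl (ℳ := ℳ)
    (D := (decomposables ℬ X).restrictScalars k) (isHomogeneous_decomposables (ℳ := ℳ))
  let := (isInternal_submoduleGrading hW).chooseDecomposition
  have hg : ∀ n, ∀ w ∈ submoduleGrading ℳ W n, W.subtype w ∈ ℳ n := fun _ _ hw => hw
  have hφ : Function.Surjective (inducedMap R W.subtype) :=
    inducedMap_surjective (ℬ := ℬ) hg (by rw [W.range_subtype, hcompl.sup_eq_top])
  have hker := ker_inducedMap_le_decomposables hconn W.injective_subtype
    (by rw [W.range_subtype]; exact hcompl.disjoint)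
  have hhom := isHomogeneous_ker_inducedMap (ℬ := ℬ) hg
  let := (isInternal_submoduleGrading hhom).chooseDecomposition
  have hsubsingleton : Subsingleton (LinearMap.ker (inducedMap R W.subtype)) :=
    subsingleton_of_decomposables_eq_top
      (submoduleGrading (tensorGrading ℬ (submoduleGrading ℳ W)) _)
      (decomposables_ker_eq_top hconn hT hφ hker hExt)
  have hinj : Function.Injective (inducedMap R W.subtype) :=
    LinearMap.ker_eq_bot.1 (Submodule.subsingleton_iff_eq_bot.1 hsubsingleton)
  exact .of_equiv (LinearEquiv.ofBijective _ ⟨hinj, hφ⟩)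

theorem hasProjectiveDimensionLT_of_subsingleton_ext [Nontrivial T] (hconn : ℬ 0 = 1)
    (hT : (HomogeneousIdeal.irrelevant ℬ).toIdeal ≤ Module.annihilator R T) (n : ℕ)
    (X : Type u) [AddCommGroup X] [Module k X] [Module R X] [IsScalarTower k R X]
    (ℳ : ℕ → Submodule k X) [Decomposition ℳ] [SetLike.GradedSMul ℬ ℳ]
    (hExt : Subsingleton (Ext (ModuleCat.of R X) (ModuleCat.of R T) (n + 1))) :
    HasProjectiveDimensionLT (ModuleCat.of R X) (n + 1) := by
  induction n generalizing X with
  | zero =>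
    have := projective_of_subsingleton_ext_one hconn hT ℳ hExt
    exact projective_iff_hasProjectiveDimensionLT_one.1 ((IsProjective.iff_projective X).1 this)
  | succ n ih =>
    have hφ := actionMap_surjective (k := k) (A := R) X
    have hhom : SetLike.IsHomogeneous (tensorGrading ℬ ℳ) (LinearMap.ker (actionMap k R X)) :=
      isHomogeneous_ker_inducedMap fun _ _ hx => hx
    let := (isInternal_submoduleGrading hhom).chooseDecomposition
    exact (hasProjectiveDimensionLT_add_two_iff_ker hφ n).2 <|
      ih _ (submoduleGrading (tensorGrading ℬ ℳ) _) ((subsingleton_ext_add_two_iff_ker hφ n).1 hExt)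

end MinimalCover

section GlobalDimension

open Abelian

variable {k A : Type u} [Field k] [Ring A] [Algebra k A]

theorem globalDim_le_projDim_enveloping :
    Ring.globalDim A ≤ (ModuleCat.of (A ⊗[k] Aᵐᵒᵖ) A).projDim := by
  refine iSup_le fun M => projDim_le_projDim_of_forall fun n h => ?_
  refine hasProjectiveDimensionLT_of_enoughInjectives M (n + 1) fun N => ?_
  let : Module k M := Module.compHom M (algebraMap k A)
  let : Module k N := Module.compHom N (algebraMap k A)
  have : IsScalarTower k A M := .of_algebraMap_smul fun _ _ => rfl
  have : IsScalarTower k A N := .of_algebraMap_smul fun _ _ => rfl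
  exact (subsingleton_ext_homBimodule_iff (k := k) n M).1 <|
    HasProjectiveDimensionLT.subsingleton _ (n + 1) (n + 1) le_rfl _

variable {𝒜 : ℕ → Submodule k A} [GradedAlgebra 𝒜]

lemma irrelevant_le_annihilator_homBimodule {M N : Type*}
    [AddCommGroup M] [Module k M] [Module A M] [IsScalarTower k A M]
    [AddCommGroup N] [Module k N] [Module A N] [IsScalarTower k A N]
    (hM : (HomogeneousIdeal.irrelevant 𝒜).toIdeal ≤ Module.annihilator A M)
    (hN : (HomogeneousIdeal.irrelevant 𝒜).toIdeal ≤ Module.annihilator A N) :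
    (HomogeneousIdeal.irrelevant (tensorGrading 𝒜 (opGrading 𝒜))).toIdeal ≤
      Module.annihilator (A ⊗[k] Aᵐᵒᵖ) (HomBimodule k M N) := by
  refine (HomogeneousIdeal.toIdeal_irrelevant_le _).2 fun n hn r hr => ?_
  let I := Module.annihilator (A ⊗[k] Aᵐᵒᵖ) (HomBimodule k M N)
  suffices hle : tensorGrading 𝒜 (opGrading 𝒜) n ≤ I.restrictScalars k from hle hr
  refine tensorGrading_le_iff.2 fun i j hij a ha b hb => ?_
  refine Module.mem_annihilator.2 fun f => HomBimodule.ext fun m => ?_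
  rw [HomBimodule.tmul_smul_apply]
  obtain hi | hj : 0 < i ∨ 0 < j := by lia
  · exact Module.mem_annihilator.1 (hN (HomogeneousIdeal.mem_irrelevant_of_mem 𝒜 hi ha)) _
  · have hb' : b.unop • m = 0 :=
      Module.mem_annihilator.1 (hM (HomogeneousIdeal.mem_irrelevant_of_mem 𝒜 hj hb)) m
    rw [hb', map_zero, smul_zero]
    rfl

theorem projDim_enveloping_le_of_irrelevant_le_annihilator (hconn : 𝒜 0 = 1)
    (T : Type u) [Nontrivial T] [AddCommGroup T] [Module k T] [Module A T] [IsScalarTower k A T]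
    (hT : (HomogeneousIdeal.irrelevant 𝒜).toIdeal ≤ Module.annihilator A T) :
    (ModuleCat.of (A ⊗[k] Aᵐᵒᵖ) A).projDim ≤ (ModuleCat.of A T).projDim := by
  have : Nontrivial (HomBimodule k T T) := inferInstanceAs (Nontrivial (T →ₗ[k] T))
  refine projDim_le_projDim_of_forall fun n h => ?_
  refine hasProjectiveDimensionLT_of_subsingleton_ext (T := HomBimodule k T T)
    (tensorGrading_zero_eq_one hconn (opGrading_zero_eq_one hconn))
    (irrelevant_le_annihilator_homBimodule hT hT) n A 𝒜 ?_
  exact (subsingleton_ext_homBimodule_iff n T).2 <|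
    HasProjectiveDimensionLT.subsingleton _ (n + 1) (n + 1) le_rfl _

end GlobalDimension

set_option synthInstance.maxHeartbeats 1000000 in
set_option maxHeartbeats 1000000 in
/-- Lemma 4.3(b): for a connected graded `k`-algebra `A` (with grading `𝒜`,
`𝒜 0 = k·1`, and augmentation `ε` whose kernel is the augmentation ideal `A_{≥1}`),
the projective dimension of `A` as a left `A^e`-module equals the projective dimension of the
trivial module `k` as a left `A`-module, and the latter equals the global dimension of `A`. -/
theorem stmt_9 (k : Type u) [Field k] (A : Type u) [Ring A] [Algebra k A]
    (𝒜 : ℕ → Submodule k A) [GradedAlgebra 𝒜]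
    (hconn : 𝒜 0 = (1 : Submodule k A))
    (ε : A →ₐ[k] k)
    (hker : RingHom.ker ε.toRingHom = Ideal.span {x : A | ∃ i, 0 < i ∧ x ∈ 𝒜 i})
    [Module A k] (hsmul : ∀ (a : A) (c : k), a • c = ε a * c) :
    ModuleCat.projDim (ModuleCat.of (A ⊗[k] Aᵐᵒᵖ) A) = ModuleCat.projDim (ModuleCat.of A k) ∧
      ModuleCat.projDim (ModuleCat.of A k) = Ring.globalDim A := by
  have : IsScalarTower k A k := .of_algebraMap_smul fun c x => by
    rw [hsmul, AlgHom.commutes, Algebra.algebraMap_self_apply, smul_eq_mul]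
  have hann : (HomogeneousIdeal.irrelevant 𝒜).toIdeal ≤ Module.annihilator A k := by
    refine (HomogeneousIdeal.toIdeal_irrelevant_le 𝒜).2 fun i hi a ha => ?_
    have hεa : ε a = 0 := hker.ge (Ideal.subset_span ⟨i, hi, ha⟩)
    exact Module.mem_annihilator.2 fun c => by rw [hsmul, hεa, zero_mul]
  have hself : (ModuleCat.of (A ⊗[k] Aᵐᵒᵖ) A).projDim ≤ (ModuleCat.of A k).projDim :=
    projDim_enveloping_le_of_irrelevant_le_annihilator hconn k hann
  have hglobal : Ring.globalDim A ≤ (ModuleCat.of (A ⊗[k] Aᵐᵒᵖ) A).projDim :=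
    globalDim_le_projDim_enveloping
  have htrivial : (ModuleCat.of A k).projDim ≤ Ring.globalDim A :=
    le_iSup (fun M : ModuleCat.{u} A => M.projDim) (ModuleCat.of A k)
  exact ⟨hself.antisymm (htrivial.trans hglobal), htrivial.antisymm (hglobal.trans hself)⟩
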